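/- arXiv:2007.02175 — 4 statements merged into one kernel-verified Lean document; each statement's English description precedes it below -/
import Mathlib

section
/- Let $\rho_a, \kappa_a > 0$, $\Omega_\rho, \Omega_\kappa \ge 0$, and $\omega_\rho, \omega_\kappa, \gamma \in \mathbb{R}$ be real constants. Let $v, u, w : \mathbb{R} \to \mathbb{R}^d$ and $p, q, r : \mathbb{R} \to \mathbb{R}$ be differentiable at a point $t$, and let $G : \mathbb{R} \to \mathbb{R}^d$ and $D : \mathbb{R} \to \mathbb{R}$, $f : \mathbb{R} \to \mathbb{R}^d$, $g : \mathbb{R} \to \mathbb{R}$ be given functions. Suppose that at the point $t$ the following six equations hold: $\rho_a v' + G + \rho_a \Omega_\rho^2 u = f$; $\kappa_a^{-1} p' + D + \kappa_a^{-1} \Omega_\kappa^2 q = g$; $u' - v + \omega_\rho^2 w = 0$; $w' - u = 0$; $q' - p + \gamma q + \omega_\kappa^2 r = 0$; $r' - q = 0$. Define the weighted energy density $e(t) = \tfrac12\big(\rho_a \|v(t)\|^2 + \kappa_a^{-1} p(t)^2 + \rho_a \Omega_\rho^2 \|u(t)\|^2 + \rho_a \omega_\rho^2 \Omega_\rho^2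 \|w(t)\|^2 + \kappa_a^{-1} \Omega_\kappa^2 q(t)^2 + \kappa_a^{-1} \omega_\kappa^2 \Omega_\kappa^2 r(t)^2\big)$. Then $e$ is differentiable at $t$ and $e'(t) + \gamma\, \kappa_a^{-1} \Omega_\kappa^2\, q(t)^2 + \big( p(t)\, D(t) + \langle v(t), G(t) \rangle \big) = \langle f(t), v(t) \rangle + g(t)\, p(t)$; in particular, all the coupling terms between $(v,p)$ and the auxiliary variables $(u,w,q,r)$ cancel when the equations are tested with the weights $(v, p, \rho_a\Omega_\rho^2 u, \rho_a\omega_\rho^2\Omega_\rho^2 w, \kappa_a^{-1}\Omega_\kappa^2 q, \kappa_a^{-1}\omega_\kappa^2\Omega_\kappa^2 r)$. -/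
open RealInnerProductSpace

/-- Pointwise energy identity for the Drude-type metamaterial acoustic system:
testing the six equations with the weights
`(v, p, ρa Ωρ² u, ρa ωρ² Ωρ² w, κa⁻¹ Ωκ² q, κa⁻¹ ωκ² Ωκ² r)` makes all coupling
terms between `(v, p)` and the auxiliary variables `(u, w, q, r)` cancel. -/
theorem pointwise_energy_identity
    (d : ℕ) (ρa κa Ωρ Ωκ ωρ ωκ γ : ℝ)
    (hρa : 0 < ρa) (hκa : 0 < κa) (hΩρ : 0 ≤ Ωρ) (hΩκ : 0 ≤ Ωκ)
    (v u w G f : ℝ → EuclideanSpace ℝ (Fin d)) (p q r D g : ℝ → ℝ) (t : ℝ)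
    (v' u' w' : EuclideanSpace ℝ (Fin d)) (p' q' r' : ℝ)
    (hv : HasDerivAt v v' t) (hu : HasDerivAt u u' t) (hw : HasDerivAt w w' t)
    (hp : HasDerivAt p p' t) (hq : HasDerivAt q q' t) (hr : HasDerivAt r r' t)
    (e1 : ρa • v' + G t + (ρa * Ωρ ^ 2) • u t = f t)
    (e2 : κa⁻¹ * p' + D t + κa⁻¹ * Ωκ ^ 2 * q t = g t)
    (e3 : u' - v t + ωρ ^ 2 • w t = 0)
    (e4 : w' - u t = 0)
    (e5 : q' - p t + γ * q t + ωκ ^ 2 * r t = 0)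
    (e6 : r' - q t = 0) :
    HasDerivAt
      (fun s => (1 / 2) * (ρa * ‖v s‖ ^ 2 + κa⁻¹ * p s ^ 2 + ρa * Ωρ ^ 2 * ‖u s‖ ^ 2
        + ρa * ωρ ^ 2 * Ωρ ^ 2 * ‖w s‖ ^ 2 + κa⁻¹ * Ωκ ^ 2 * q s ^ 2
        + κa⁻¹ * ωκ ^ 2 * Ωκ ^ 2 * r s ^ 2))
      (⟪f t, v t⟫ + g t * p t - γ * κa⁻¹ * Ωκ ^ 2 * q t ^ 2
        - (p t * D t + ⟪v t, G t⟫)) t := by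
  have hu' : u' = v t - ωρ ^ 2 • w t := by
    rw [eq_sub_iff_add_eq, ← sub_eq_zero, ← e3]; abel
  have hw' : w' = u t := sub_eq_zero.mp e4
  have hq' : q' = p t - γ * q t - ωκ ^ 2 * r t := by linarith
  have hr' : r' = q t := sub_eq_zero.mp e6
  subst hu' hw' hq' hr'
  have H := (((((((hv.norm_sq).const_mul ρa).add ((hp.pow 2).const_mul κa⁻¹)).add
    ((hu.norm_sq).const_mul (ρa * Ωρ ^ 2))).add
    ((hw.norm_sq).const_mul (ρa * ωρ ^ 2 * Ωρ ^ 2))).add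
    ((hq.pow 2).const_mul (κa⁻¹ * Ωκ ^ 2))).add
    ((hr.pow 2).const_mul (κa⁻¹ * ωκ ^ 2 * Ωκ ^ 2))).const_mul (1 / 2 : ℝ)
  refine H.congr_deriv ?_
  rw [← e1, ← e2]
  simp only [inner_add_left, inner_sub_right, real_inner_smul_left, real_inner_smul_right]
  rw [real_inner_comm (v t) v', real_inner_comm (v t) (G t), real_inner_comm (w t) (u t)]
  simp only [real_inner_comm (v t) (u t)]
  push_cast
  ring
end

section
/- (Independence of the solution from the auxiliary initial data on the positive-index region; Theorem 2.3 for classical solutions.) Let $\Omega_P \subseteq \Omega$ and suppose $\Omega_\rho(x) = \Omega_\kappa(x) = 0$ for all $x \in \Omega_P$, while $\Omega_\rho(x) > 0$ and $\Omega_\kappa(x) > 0$ for all $x \in \Omega \setminus \overline{\Omega_P}$. Let $(v_1,p_1,u_1,w_1,q_1,r_1)$ and $(v_2,p_2,u_2,w_2,q_2,r_2)$ be two classical solutions of the metamaterial acoustic system on $[0,T]$ with the same data $f, g$. If $v_1(0,x) = v_2(0,x)$ and $p_1(0,x) = p_2(0,x)$ for all $x \in \Omega$, and $u_1(0,x)=u_2(0,x)$,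 $w_1(0,x)=w_2(0,x)$, $q_1(0,x)=q_2(0,x)$, $r_1(0,x)=r_2(0,x)$ for all $x \in \Omega \setminus \overline{\Omega_P}$, then for every $t \in [0,T]$ the same identities hold: $v_1(t,x) = v_2(t,x)$ and $p_1(t,x) = p_2(t,x)$ for all $x \in \Omega$, and $u_1(t,x)=u_2(t,x)$, $w_1(t,x)=w_2(t,x)$, $q_1(t,x)=q_2(t,x)$, $r_1(t,x)=r_2(t,x)$ for all $x \in \Omega \setminus \overline{\Omega_P}$. -/
open MeasureTheory

noncomputable section

/-- The compact rectangular box `∏ i, [a i, b i]` in `EuclideanSpace ℝ (Fin d)`. -/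
def box {d : ℕ} (a b : EuclideanSpace ℝ (Fin d)) : Set (EuclideanSpace ℝ (Fin d)) :=
  {x | ∀ i, a i ≤ x i ∧ x i ≤ b i}

/-- The divergence `∑ i ∂ᵢ Fᵢ` of a vector field on `EuclideanSpace ℝ (Fin d)`. -/
def divg {d : ℕ} (F : EuclideanSpace ℝ (Fin d) → EuclideanSpace ℝ (Fin d))
    (x : EuclideanSpace ℝ (Fin d)) : ℝ :=
  ∑ i, fderiv ℝ F x (EuclideanSpace.single i (1 : ℝ)) i

/-- A classical solution of the Drude-type metamaterial acoustic system on `[0,T] × box a b`,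
with data `f`, `g` and homogeneous Dirichlet boundary condition `p = 0` on the boundary. -/
structure ClassicalSolution (d : ℕ) (a b : EuclideanSpace ℝ (Fin d))
    (ρa κa Ωρ Ωκ : EuclideanSpace ℝ (Fin d) → ℝ) (ωρ ωκ γ T : ℝ)
    (f : ℝ → EuclideanSpace ℝ (Fin d) → EuclideanSpace ℝ (Fin d))
    (g : ℝ → EuclideanSpace ℝ (Fin d) → ℝ) where
  v : ℝ → EuclideanSpace ℝ (Fin d) → EuclideanSpace ℝ (Fin d)
  u : ℝ → EuclideanSpace ℝ (Fin d) → EuclideanSpace ℝ (Fin d)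
  w : ℝ → EuclideanSpace ℝ (Fin d) → EuclideanSpace ℝ (Fin d)
  p : ℝ → EuclideanSpace ℝ (Fin d) → ℝ
  q : ℝ → EuclideanSpace ℝ (Fin d) → ℝ
  r : ℝ → EuclideanSpace ℝ (Fin d) → ℝ
  smooth_v : ContDiff ℝ 1 (fun z : ℝ × EuclideanSpace ℝ (Fin d) => v z.1 z.2)
  smooth_u : ContDiff ℝ 1 (fun z : ℝ × EuclideanSpace ℝ (Fin d) => u z.1 z.2)
  smooth_w : ContDiff ℝ 1 (fun z : ℝ × EuclideanSpace ℝ (Fin d) => w z.1 z.2)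
  smooth_p : ContDiff ℝ 1 (fun z : ℝ × EuclideanSpace ℝ (Fin d) => p z.1 z.2)
  smooth_q : ContDiff ℝ 1 (fun z : ℝ × EuclideanSpace ℝ (Fin d) => q z.1 z.2)
  smooth_r : ContDiff ℝ 1 (fun z : ℝ × EuclideanSpace ℝ (Fin d) => r z.1 z.2)
  eq_v : ∀ t ∈ Set.Icc (0 : ℝ) T, ∀ x ∈ box a b,
    ρa x • deriv (fun s => v s x) t + gradient (p t) x + (ρa x * Ωρ x ^ 2) • u t x = f t x
  eq_p : ∀ t ∈ Set.Icc (0 : ℝ) T, ∀ x ∈ box a b,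
    (κa x)⁻¹ * deriv (fun s => p s x) t + divg (v t) x + (κa x)⁻¹ * Ωκ x ^ 2 * q t x = g t x
  eq_u : ∀ t ∈ Set.Icc (0 : ℝ) T, ∀ x ∈ box a b,
    deriv (fun s => u s x) t - v t x + ωρ ^ 2 • w t x = 0
  eq_w : ∀ t ∈ Set.Icc (0 : ℝ) T, ∀ x ∈ box a b,
    deriv (fun s => w s x) t - u t x = 0
  eq_q : ∀ t ∈ Set.Icc (0 : ℝ) T, ∀ x ∈ box a b,
    deriv (fun s => q s x) t - p t x + γ * q t x + ωκ ^ 2 * r t x = 0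
  eq_r : ∀ t ∈ Set.Icc (0 : ℝ) T, ∀ x ∈ box a b,
    deriv (fun s => r s x) t - q t x = 0
  bc : ∀ t ∈ Set.Icc (0 : ℝ) T, ∀ x ∈ frontier (box a b), p t x = 0

theorem box_iff {d : ℕ} (a b : EuclideanSpace ℝ (Fin d)) (y : Fin d → ℝ) :
    WithLp.toLp 2 y ∈ box a b ↔ y ∈ Set.Icc (WithLp.ofLp a) (WithLp.ofLp b) := by
  simp only [box, Set.mem_setOf_eq, Set.mem_Icc, Pi.le_def]
  exact ⟨fun h => ⟨fun i => (h i).1, fun i => (h i).2⟩, fun h i => ⟨h.1 i, h.2 i⟩⟩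

theorem mem_frontier_box {d : ℕ} (a b x : EuclideanSpace ℝ (Fin d)) (hx : x ∈ box a b)
    (i : Fin d) (hi : x i = a i ∨ x i = b i) : x ∈ frontier (box a b) := by
  have hbox : box a b = (EuclideanSpace.equiv (Fin d) ℝ).toHomeomorph ⁻¹'
      (Set.univ.pi fun i => Set.Icc (a i) (b i)) := by
    ext z
    exact ⟨fun h i _ => h i, fun h i => h i (Set.mem_univ i)⟩
  refine ⟨subset_closure hx, ?_⟩
  rw [hbox, ← Homeomorph.preimage_interior, interior_pi_set Set.finite_univ]
  intro h
  have h2 := h i (Set.mem_univ i)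
  simp only [interior_Icc] at h2
  have h3 : a i < x i ∧ x i < b i := h2
  rcases hi with h4 | h4 <;> linarith [h3.1, h3.2]

theorem Icc_sub_closure_interior {d : ℕ} (a b : Fin d → ℝ) (hab : ∀ i, a i < b i) :
    Set.Icc a b ⊆ closure (interior (Set.Icc a b)) := by
  rw [← Set.pi_univ_Icc, interior_pi_set Set.finite_univ, closure_pi_set]
  simp only [interior_Icc]
  apply Set.pi_mono
  intro i _
  rw [closure_Ioo (hab i).ne]

theorem div_thm {n : ℕ} (a b : EuclideanSpace ℝ (Fin (n+1))) (hab : ∀ i, a i < b i)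
    (P : EuclideanSpace ℝ (Fin (n+1)) → ℝ)
    (F : EuclideanSpace ℝ (Fin (n+1)) → EuclideanSpace ℝ (Fin (n+1)))
    (hP : ContDiff ℝ 1 P) (hF : ContDiff ℝ 1 F)
    (hb : ∀ x ∈ frontier (box a b), P x = 0) :
    ∫ y in Set.Icc (WithLp.ofLp a) (WithLp.ofLp b),
      (inner ℝ (gradient P (WithLp.toLp 2 y)) (F (WithLp.toLp 2 y))
        + P (WithLp.toLp 2 y) * divg F (WithLp.toLp 2 y)) = 0 := by
  let e := EuclideanSpace.equiv (Fin (n+1)) ℝ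
  let G : (Fin (n+1) → ℝ) → (Fin (n+1) → ℝ) := fun y => e (P (e.symm y) • F (e.symm y))
  have hG : ContDiff ℝ 1 G := by
    apply e.contDiff.comp
    exact (hP.comp e.symm.contDiff).smul (hF.comp e.symm.contDiff)
  have hsum : ∀ y, ∑ i, fderiv ℝ G y (Pi.single i 1) i =
      inner ℝ (gradient P (WithLp.toLp 2 y)) (F (WithLp.toLp 2 y))
        + P (WithLp.toLp 2 y) * divg F (WithLp.toLp 2 y) := by
    intro y
    have h1 : HasFDerivAt P (fderiv ℝ P (e.symm y)) (e.symm y) :=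
      (hP.differentiable (by norm_num) _).hasFDerivAt
    have h2 : HasFDerivAt F (fderiv ℝ F (e.symm y)) (e.symm y) :=
      (hF.differentiable (by norm_num) _).hasFDerivAt
    have h3 := e.hasFDerivAt.comp y ((h1.smul h2).comp y e.symm.hasFDerivAt)
    have h4 : fderiv ℝ G y = _ := h3.fderiv
    rw [h4]
    have h5 : ∀ i, e.symm (Pi.single i 1) = EuclideanSpace.single i (1:ℝ) := fun i => rfl
    have h6 : ∀ z, e.symm z = WithLp.toLp 2 z := fun i => rfl
    have h7 : ∀ i, fderiv ℝ P (WithLp.toLp 2 y) (EuclideanSpace.single i (1:ℝ))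
        = gradient P (WithLp.toLp 2 y) i := by
      intro i
      have := (hP.differentiable (by norm_num) (WithLp.toLp 2 y)).hasGradientAt.hasFDerivAt.fderiv
      rw [this]
      rw [InnerProductSpace.toDual_apply_apply, EuclideanSpace.inner_single_right]
      simp
    have h8 : ∀ z i, e z i = z i := fun z i => rfl
    simp only [ContinuousLinearMap.comp_apply, ContinuousLinearEquiv.coe_coe, h5, h8,
      ContinuousLinearMap.add_apply, ContinuousLinearMap.smul_apply,
      ContinuousLinearMap.smulRight_apply, h6, h7, PiLp.add_apply, PiLp.smul_apply,
      Finset.sum_add_distrib, divg, Finset.mul_sum, smul_eq_mul, PiLp.inner_apply]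
    rw [add_comm]
    congr 1
    simp [mul_comm]
  simp only [← hsum]
  have hle : WithLp.ofLp a ≤ WithLp.ofLp b := fun i => (hab i).le
  rw [integral_divergence_of_hasFDerivAt_off_countable _ _ hle G (fderiv ℝ G) ∅
    Set.countable_empty hG.continuous.continuousOn
    (fun x _ => (hG.differentiable (by norm_num) x).hasFDerivAt)]
  · apply Finset.sum_eq_zero
    intro i _
    have key : ∀ c : ℝ, (c = a i ∨ c = b i) → ∫ x in Set.Icc (WithLp.ofLp a ∘ i.succAbove)
        (WithLp.ofLp b ∘ i.succAbove), G (i.insertNth c x) i = 0 := by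
      intro c hc
      apply setIntegral_eq_zero_of_forall_eq_zero
      intro x hx
      have hm : e.symm (i.insertNth c x) ∈ box a b := by
        apply (box_iff a b _).2
        rw [Fin.insertNth_mem_Icc]
        refine ⟨?_, hx⟩
        rcases hc with h | h <;> rw [h] <;> constructor <;> linarith [hab i]
      have : P (e.symm (i.insertNth c x)) = 0 := by
        apply hb
        apply mem_frontier_box a b _ hm i
        have : (e.symm (i.insertNth c x)) i = c := by
          change (i.insertNth c x : Fin (n+1) → ℝ) i = c
          simp
        rw [this]; exact hc
      simp [G, this]
    rw [key _ (Or.inr rfl), key _ (Or.inl rfl), sub_zero]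
  · apply Continuous.integrableOn_Icc
    have := hG.continuous_fderiv (by norm_num)
    fun_prop

theorem time_hasDeriv {d : ℕ} {W : Type*} [NormedAddCommGroup W] [NormedSpace ℝ W]
    {h : ℝ → EuclideanSpace ℝ (Fin d) → W}
    (hh : ContDiff ℝ 1 (fun z : ℝ × EuclideanSpace ℝ (Fin d) => h z.1 z.2)) (t x) :
    HasDerivAt (fun s => h s x) (deriv (fun s => h s x) t) t := by
  have : ContDiff ℝ 1 (fun s => h s x) := hh.comp (contDiff_id.prodMk contDiff_const)
  exact (this.differentiable (by norm_num) t).hasDerivAt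

theorem time_cont {d : ℕ} {W : Type*} [NormedAddCommGroup W] [NormedSpace ℝ W]
    {h : ℝ → EuclideanSpace ℝ (Fin d) → W}
    (hh : ContDiff ℝ 1 (fun z : ℝ × EuclideanSpace ℝ (Fin d) => h z.1 z.2)) :
    Continuous (fun z : ℝ × EuclideanSpace ℝ (Fin d) => deriv (fun s => h s z.2) z.1) := by
  have : (fun z : ℝ × EuclideanSpace ℝ (Fin d) => deriv (fun s => h s z.2) z.1) =
      fun z => fderiv ℝ (fun z : ℝ × EuclideanSpace ℝ (Fin d) => h z.1 z.2) z (1, 0) := by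
    ext1 z
    have h1 := (hh.differentiable (by norm_num) z).hasFDerivAt
    have h2 : HasDerivAt (fun s : ℝ => (s, z.2)) ((1:ℝ), (0 : EuclideanSpace ℝ (Fin d))) z.1 :=
      (hasDerivAt_id z.1).prodMk (hasDerivAt_const _ _)
    exact (HasFDerivAt.comp_hasDerivAt (x := z.1) (f := fun s : ℝ => (s, z.2)) h1 h2).deriv
  rw [this]
  exact (hh.continuous_fderiv (by norm_num)).clm_apply continuous_const

theorem space_cd {d : ℕ} {W : Type*} [NormedAddCommGroup W] [NormedSpace ℝ W]
    {h : ℝ → EuclideanSpace ℝ (Fin d) → W}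
    (hh : ContDiff ℝ 1 (fun z : ℝ × EuclideanSpace ℝ (Fin d) => h z.1 z.2)) (t) :
    ContDiff ℝ 1 (h t) :=
  hh.comp (contDiff_const.prodMk contDiff_id)

/-- The difference of two solutions solves the homogeneous system. -/
def diffSol {d : ℕ} {a b : EuclideanSpace ℝ (Fin d)}
    {ρa κa Ωρ Ωκ : EuclideanSpace ℝ (Fin d) → ℝ} {ωρ ωκ γ T : ℝ}
    {f : ℝ → EuclideanSpace ℝ (Fin d) → EuclideanSpace ℝ (Fin d)}
    {g : ℝ → EuclideanSpace ℝ (Fin d) → ℝ}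
    (S₁ S₂ : ClassicalSolution d a b ρa κa Ωρ Ωκ ωρ ωκ γ T f g) :
    ClassicalSolution d a b ρa κa Ωρ Ωκ ωρ ωκ γ T (fun _ _ => 0) (fun _ _ => 0) where
  v t x := S₁.v t x - S₂.v t x
  u t x := S₁.u t x - S₂.u t x
  w t x := S₁.w t x - S₂.w t x
  p t x := S₁.p t x - S₂.p t x
  q t x := S₁.q t x - S₂.q t x
  r t x := S₁.r t x - S₂.r t x
  smooth_v := S₁.smooth_v.sub S₂.smooth_v
  smooth_u := S₁.smooth_u.sub S₂.smooth_u
  smooth_w := S₁.smooth_w.sub S₂.smooth_w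
  smooth_p := S₁.smooth_p.sub S₂.smooth_p
  smooth_q := S₁.smooth_q.sub S₂.smooth_q
  smooth_r := S₁.smooth_r.sub S₂.smooth_r
  eq_v := by
    intro t ht x hx
    have e1 := S₁.eq_v t ht x hx
    have e2 := S₂.eq_v t ht x hx
    have h1 := ((time_hasDeriv S₁.smooth_v t x).sub (time_hasDeriv S₂.smooth_v t x)).deriv
    have h2 : gradient (fun x => S₁.p t x - S₂.p t x) x
        = gradient (S₁.p t) x - gradient (S₂.p t) x := by
      have i1 := ((space_cd S₁.smooth_p t).differentiable (by norm_num) x)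
      have i2 := ((space_cd S₂.smooth_p t).differentiable (by norm_num) x)
      unfold gradient
      rw [← map_sub]
      congr 1
      exact fderiv_sub i1 i2
    change ρa x • deriv ((fun s => S₁.v s x) - fun s => S₂.v s x) t + _ + _ = 0
    rw [h1, h2, ← sub_eq_zero.2 (e1.trans e2.symm)]
    simp only [smul_sub]
    abel
  eq_p := by
    intro t ht x hx
    have e1 := S₁.eq_p t ht x hx
    have e2 := S₂.eq_p t ht x hx
    have h1 := ((time_hasDeriv S₁.smooth_p t x).sub (time_hasDeriv S₂.smooth_p t x)).deriv
    have h2 : divg (fun x => S₁.v t x - S₂.v t x) x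
        = divg (S₁.v t) x - divg (S₂.v t) x := by
      have i1 := ((space_cd S₁.smooth_v t).differentiable (by norm_num) x)
      have i2 := ((space_cd S₂.smooth_v t).differentiable (by norm_num) x)
      unfold divg
      rw [← Finset.sum_sub_distrib]
      have : fderiv ℝ (fun x => S₁.v t x - S₂.v t x) x = _ := fderiv_sub i1 i2
      rw [this]
      rfl
    change (κa x)⁻¹ * deriv ((fun s => S₁.p s x) - fun s => S₂.p s x) t + _ + _ = 0
    rw [h1, h2, ← sub_eq_zero.2 (e1.trans e2.symm)]
    ring
  eq_u := by
    intro t ht x hx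
    have e1 := S₁.eq_u t ht x hx
    have e2 := S₂.eq_u t ht x hx
    have h1 := ((time_hasDeriv S₁.smooth_u t x).sub (time_hasDeriv S₂.smooth_u t x)).deriv
    change deriv ((fun s => S₁.u s x) - fun s => S₂.u s x) t - _ + _ = 0
    rw [h1, ← sub_eq_zero.2 (e1.trans e2.symm)]
    simp only [smul_sub]
    abel
  eq_w := by
    intro t ht x hx
    have e1 := S₁.eq_w t ht x hx
    have e2 := S₂.eq_w t ht x hx
    have h1 := ((time_hasDeriv S₁.smooth_w t x).sub (time_hasDeriv S₂.smooth_w t x)).deriv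
    change deriv ((fun s => S₁.w s x) - fun s => S₂.w s x) t - _ = 0
    rw [h1, ← sub_eq_zero.2 (e1.trans e2.symm)]
    abel
  eq_q := by
    intro t ht x hx
    have e1 := S₁.eq_q t ht x hx
    have e2 := S₂.eq_q t ht x hx
    have h1 := ((time_hasDeriv S₁.smooth_q t x).sub (time_hasDeriv S₂.smooth_q t x)).deriv
    change deriv ((fun s => S₁.q s x) - fun s => S₂.q s x) t - _ + _ + _ = 0
    rw [h1, ← sub_eq_zero.2 (e1.trans e2.symm)]
    ring
  eq_r := by
    intro t ht x hx
    have e1 := S₁.eq_r t ht x hx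
    have e2 := S₂.eq_r t ht x hx
    have h1 := ((time_hasDeriv S₁.smooth_r t x).sub (time_hasDeriv S₂.smooth_r t x)).deriv
    change deriv ((fun s => S₁.r s x) - fun s => S₂.r s x) t - _ = 0
    rw [h1, ← sub_eq_zero.2 (e1.trans e2.symm)]
    ring
  bc := by
    intro t ht x hx
    simp [S₁.bc t ht x hx, S₂.bc t ht x hx]

/-- Twice the energy density. -/
def dens {d : ℕ} (A B C D E G : EuclideanSpace ℝ (Fin d) → ℝ)
    (v u w : ℝ → EuclideanSpace ℝ (Fin d) → EuclideanSpace ℝ (Fin d))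
    (p q r : ℝ → EuclideanSpace ℝ (Fin d) → ℝ) (t : ℝ) (x : EuclideanSpace ℝ (Fin d)) : ℝ :=
  A x * inner ℝ (v t x) (v t x) + B x * (p t x * p t x) + C x * inner ℝ (u t x) (u t x)
    + D x * inner ℝ (w t x) (w t x) + E x * (q t x * q t x) + G x * (r t x * r t x)

/-- Time derivative of the energy density. -/
def dens' {d : ℕ} (A B C D E G : EuclideanSpace ℝ (Fin d) → ℝ)
    (v u w : ℝ → EuclideanSpace ℝ (Fin d) → EuclideanSpace ℝ (Fin d))
    (p q r : ℝ → EuclideanSpace ℝ (Fin d) → ℝ) (t : ℝ) (x : EuclideanSpace ℝ (Fin d)) : ℝ :=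
  A x * (2 * inner ℝ (v t x) (deriv (fun s => v s x) t))
    + B x * (2 * (p t x * deriv (fun s => p s x) t))
    + C x * (2 * inner ℝ (u t x) (deriv (fun s => u s x) t))
    + D x * (2 * inner ℝ (w t x) (deriv (fun s => w s x) t))
    + E x * (2 * (q t x * deriv (fun s => q s x) t))
    + G x * (2 * (r t x * deriv (fun s => r s x) t))

theorem energy_zero {n : ℕ} {a b : EuclideanSpace ℝ (Fin (n+1))} (hab : ∀ i, a i < b i)
    {ρa κa Ωρ Ωκ : EuclideanSpace ℝ (Fin (n+1)) → ℝ}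
    (hρcont : Continuous ρa) (hκcont : Continuous κa)
    (hΩρcont : Continuous Ωρ) (hΩκcont : Continuous Ωκ)
    (c : ℝ) (hc : 0 < c) (hρ : ∀ x ∈ box a b, 0 < ρa x) (hκ : ∀ x ∈ box a b, c ≤ κa x)
    {ωρ ωκ γ T : ℝ} (hγ : 0 ≤ γ)
    (S : ClassicalSolution (n+1) a b ρa κa Ωρ Ωκ ωρ ωκ γ T (fun _ _ => 0) (fun _ _ => 0))
    (hv0 : ∀ x ∈ box a b, S.v 0 x = 0) (hp0 : ∀ x ∈ box a b, S.p 0 x = 0)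
    (h0 : ∀ x ∈ box a b, (Ωρ x = 0 ∧ Ωκ x = 0) ∨
      (S.u 0 x = 0 ∧ S.w 0 x = 0 ∧ S.q 0 x = 0 ∧ S.r 0 x = 0)) :
    ∀ t ∈ Set.Icc (0 : ℝ) T, ∀ x ∈ box a b,
      ρa x * inner ℝ (S.v t x) (S.v t x) + (κa x)⁻¹ * (S.p t x * S.p t x)
      + (ρa x * Ωρ x ^ 2) * inner ℝ (S.u t x) (S.u t x)
      + (ρa x * Ωρ x ^ 2 * ωρ ^ 2) * inner ℝ (S.w t x) (S.w t x)
      + ((κa x)⁻¹ * Ωκ x ^ 2) * (S.q t x * S.q t x)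
      + ((κa x)⁻¹ * Ωκ x ^ 2 * ωκ ^ 2) * (S.r t x * S.r t x) = 0 := by
  intro t ht
  -- a globally continuous version of `κa⁻¹`
  obtain ⟨K, hK, hKc⟩ : ∃ K : EuclideanSpace ℝ (Fin (n+1)) → ℝ,
      (∀ x ∈ box a b, K x = (κa x)⁻¹) ∧ Continuous K := by
    refine ⟨fun x => (max (κa x) c)⁻¹, fun x hx => by simp [max_eq_left (hκ x hx)], ?_⟩
    exact (hκcont.max continuous_const).inv₀ fun x => (lt_max_of_lt_right hc).ne'
  have hKpos : ∀ x ∈ box a b, 0 < K x := fun x hx => by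
    rw [hK x hx]; exact inv_pos.2 (hc.trans_le (hκ x hx))
  let A := ρa
  let B := K
  let C := fun x => ρa x * Ωρ x ^ 2
  let D := fun x => ρa x * Ωρ x ^ 2 * ωρ ^ 2
  let E := fun x => K x * Ωκ x ^ 2
  let G := fun x => K x * Ωκ x ^ 2 * ωκ ^ 2
  have hA : Continuous A := hρcont
  have hB : Continuous B := hKc
  have hC : Continuous C := by fun_prop
  have hD : Continuous D := by fun_prop
  have hE : Continuous E := by fun_prop
  have hG : Continuous G := by fun_prop
  let e := dens A B C D E G S.v S.u S.w S.p S.q S.r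
  let e' := dens' A B C D E G S.v S.u S.w S.p S.q S.r
  have cv := S.smooth_v.continuous
  have cu := S.smooth_u.continuous
  have cw := S.smooth_w.continuous
  have cp := S.smooth_p.continuous
  have cq := S.smooth_q.continuous
  have cr := S.smooth_r.continuous
  have cv' := time_cont S.smooth_v
  have cu' := time_cont S.smooth_u
  have cw' := time_cont S.smooth_w
  have cp' := time_cont S.smooth_p
  have cq' := time_cont S.smooth_q
  have cr' := time_cont S.smooth_r
  have he : Continuous (fun z : ℝ × EuclideanSpace ℝ (Fin (n+1)) => e z.1 z.2) := by
    simp only [e, dens]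
    fun_prop
  have he' : Continuous (fun z : ℝ × EuclideanSpace ℝ (Fin (n+1)) => e' z.1 z.2) := by
    simp only [e', dens']
    fun_prop
  have hderiv : ∀ s x, HasDerivAt (fun s => e s x) (e' s x) s := by
    intro s x
    have dv := time_hasDeriv S.smooth_v s x
    have du := time_hasDeriv S.smooth_u s x
    have dw := time_hasDeriv S.smooth_w s x
    have dp := time_hasDeriv S.smooth_p s x
    have dq := time_hasDeriv S.smooth_q s x
    have dr := time_hasDeriv S.smooth_r s x
    have := ((((((dv.inner ℝ dv).const_mul (A x)).add ((dp.mul dp).const_mul (B x))).add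
      ((du.inner ℝ du).const_mul (C x))).add ((dw.inner ℝ dw).const_mul (D x))).add
      ((dq.mul dq).const_mul (E x))).add ((dr.mul dr).const_mul (G x))
    refine HasDerivAt.congr_deriv this ?_
    simp only [e', dens', real_inner_comm (S.v s x), real_inner_comm (S.u s x),
      real_inner_comm (S.w s x)]
    ring
  have hcl : Continuous (fun y : Fin (n+1) → ℝ => (WithLp.toLp 2 y : EuclideanSpace ℝ (Fin (n+1)))) :=
    PiLp.continuous_toLp 2 _
  have hFTC : ∀ x, ∫ s in (0:ℝ)..t, e' s x = e t x - e 0 x := by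
    intro x
    apply intervalIntegral.integral_eq_sub_of_hasDerivAt (fun s _ => hderiv s x)
    apply Continuous.intervalIntegrable
    exact he'.comp (by fun_prop : Continuous fun s : ℝ => (s, x))
  have hle : ∀ s ∈ Set.Icc (0:ℝ) t,
      ∫ y in Set.Icc (WithLp.ofLp a) (WithLp.ofLp b), e' s (WithLp.toLp 2 y) ≤ 0 := by
    intro s hs
    have hsT : s ∈ Set.Icc (0:ℝ) T := ⟨hs.1, hs.2.trans ht.2⟩
    have hdiv := div_thm a b hab (S.p s) (S.v s) (space_cd S.smooth_p s) (space_cd S.smooth_v s)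
      (S.bc s hsT)
    have hpt : ∀ y ∈ Set.Icc (WithLp.ofLp a) (WithLp.ofLp b), e' s (WithLp.toLp 2 y) =
        (-2) * (inner ℝ (gradient (S.p s) (WithLp.toLp 2 y)) (S.v s (WithLp.toLp 2 y))
        + S.p s (WithLp.toLp 2 y) * divg (S.v s) (WithLp.toLp 2 y))
        + (-2) * γ * (E (WithLp.toLp 2 y) * (S.q s (WithLp.toLp 2 y))^2) := by
      intro y hy
      have hx := (box_iff a b y).2 hy
      generalize (WithLp.toLp 2 y : EuclideanSpace ℝ (Fin (n+1))) = x at hx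
      have ev := S.eq_v s hsT x hx
      have ep := S.eq_p s hsT x hx
      have eu := S.eq_u s hsT x hx
      have ew := S.eq_w s hsT x hx
      have eq := S.eq_q s hsT x hx
      have er := S.eq_r s hsT x hx
      rw [← hK x hx] at ep
      have ev2 := congrArg (fun z => inner ℝ (S.v s x) z) ev
      have eu2 := congrArg (fun z => inner ℝ (S.u s x) z) eu
      have ew2 := congrArg (fun z => inner ℝ (S.w s x) z) ew
      simp only [inner_add_right, inner_sub_right, inner_smul_right, inner_zero_right] at ev2 eu2 ew2
      have i1 := real_inner_comm (S.u s x) (S.v s x)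
      have i2 := real_inner_comm (S.u s x) (S.w s x)
      have i3 := real_inner_comm (gradient (S.p s) x) (S.v s x)
      rw [i3] at ev2
      simp only [e', dens', A, B, C, D, E, G]
      rw [i1] at ev2
      rw [i2] at ew2
      linear_combination 2 * ev2 + 2 * S.p s x * ep + 2 * ρa x * Ωρ x ^ 2 * eu2
        + 2 * ρa x * Ωρ x ^ 2 * ωρ ^ 2 * ew2 + 2 * K x * Ωκ x ^ 2 * S.q s x * eq
        + 2 * K x * Ωκ x ^ 2 * ωκ ^ 2 * S.r s x * er
    have hi1 : IntegrableOn (fun y : Fin (n+1) → ℝ => e' s (WithLp.toLp 2 y))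
        (Set.Icc (WithLp.ofLp a) (WithLp.ofLp b)) := by
      apply Continuous.integrableOn_Icc
      exact he'.comp (continuous_const.prodMk hcl)
    have hcq : Continuous (fun y : Fin (n+1) → ℝ => (-2) * γ * (E (WithLp.toLp 2 y) * (S.q s (WithLp.toLp 2 y))^2)) := by
      have : Continuous (S.q s) := (space_cd S.smooth_q s).continuous
      fun_prop
    have hi2 := hcq.integrableOn_Icc (μ := volume) (a := WithLp.ofLp a) (b := WithLp.ofLp b)
    calc ∫ y in Set.Icc (WithLp.ofLp a) (WithLp.ofLp b), e' s (WithLp.toLp 2 y)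
        = ∫ y in Set.Icc (WithLp.ofLp a) (WithLp.ofLp b),
          ((e' s (WithLp.toLp 2 y) - (-2) * γ * (E (WithLp.toLp 2 y) * (S.q s (WithLp.toLp 2 y))^2))
          + (-2) * γ * (E (WithLp.toLp 2 y) * (S.q s (WithLp.toLp 2 y))^2)) := by simp
      _ = (∫ y in Set.Icc (WithLp.ofLp a) (WithLp.ofLp b),
          (e' s (WithLp.toLp 2 y) - (-2) * γ * (E (WithLp.toLp 2 y) * (S.q s (WithLp.toLp 2 y))^2)))
          + ∫ y in Set.Icc (WithLp.ofLp a) (WithLp.ofLp b),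
            (-2) * γ * (E (WithLp.toLp 2 y) * (S.q s (WithLp.toLp 2 y))^2) :=
          integral_add (Integrable.sub hi1 hi2) hi2
      _ ≤ 0 + 0 := by
          apply add_le_add
          · apply le_of_eq
            rw [setIntegral_congr_fun measurableSet_Icc (g := fun y =>
              (-2) * (inner ℝ (gradient (S.p s) (WithLp.toLp 2 y)) (S.v s (WithLp.toLp 2 y))
              + S.p s (WithLp.toLp 2 y) * divg (S.v s) (WithLp.toLp 2 y)))
              (fun y hy => by simp only [hpt y hy]; ring)]
            rw [integral_const_mul, hdiv, mul_zero]
          · apply setIntegral_nonpos measurableSet_Icc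
            intro y hy
            have h1 : 0 ≤ E (WithLp.toLp 2 y) :=
              mul_nonneg (hKpos _ ((box_iff a b y).2 hy)).le (sq_nonneg _)
            have h2 : 0 ≤ γ * (E (WithLp.toLp 2 y) * (S.q s (WithLp.toLp 2 y))^2) := by positivity
            linarith
      _ = 0 := by simp
  have hswap := intervalIntegral_integral_swap (a := 0) (b := t)
    (μ := volume.restrict (Set.Icc (WithLp.ofLp a) (WithLp.ofLp b)))
    (f := fun s (y : Fin (n+1) → ℝ) => e' s (WithLp.toLp 2 y)) (by
      rw [Measure.prod_restrict]
      have hcont : Continuous (Function.uncurry fun s (y : Fin (n+1) → ℝ) => e' s (WithLp.toLp 2 y)) :=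
        he'.comp (continuous_fst.prodMk (hcl.comp continuous_snd))
      have hI : IntegrableOn (Function.uncurry fun s (y : Fin (n+1) → ℝ) => e' s (WithLp.toLp 2 y))
          (Set.uIcc 0 t ×ˢ Set.Icc (WithLp.ofLp a) (WithLp.ofLp b))
          ((volume : Measure ℝ).prod (volume : Measure (Fin (n+1) → ℝ))) :=
        hcont.continuousOn.integrableOn_compact (isCompact_uIcc.prod isCompact_Icc)
      exact hI.mono_set (Set.prod_mono Set.uIoc_subset_uIcc subset_rfl))
  simp only [hFTC] at hswap
  have hneg : ∫ s in (0:ℝ)..t, ∫ y in Set.Icc (WithLp.ofLp a) (WithLp.ofLp b),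
      e' s (WithLp.toLp 2 y) ≤ 0 := by
    rw [intervalIntegral.integral_of_le ht.1]
    exact setIntegral_nonpos measurableSet_Ioc fun s hs => hle s ⟨hs.1.le, hs.2⟩
  rw [hswap] at hneg
  have he0 : ∀ x ∈ box a b, e 0 x = 0 := by
    intro x hx
    simp only [e, dens, hv0 x hx, hp0 x hx, C, D, E, G]
    rcases h0 x hx with ⟨h1, h2⟩ | ⟨h1, h2, h3, h4⟩
    · simp [h1, h2]
    · simp [h1, h2, h3, h4]
  have hepos : ∀ x ∈ box a b, 0 ≤ e t x := by
    intro x hx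
    have h1 := hρ x hx
    have h2 := hKpos x hx
    have j1 := real_inner_self_nonneg (x := S.v t x)
    have j2 := real_inner_self_nonneg (x := S.u t x)
    have j3 := real_inner_self_nonneg (x := S.w t x)
    have j4 := mul_self_nonneg (S.p t x)
    have j5 := mul_self_nonneg (S.q t x)
    have j6 := mul_self_nonneg (S.r t x)
    simp only [e, dens, A, B, C, D, E, G]
    positivity
  rw [setIntegral_congr_fun measurableSet_Icc (g := fun y => e t (WithLp.toLp 2 y))
    (fun y hy => by simp only [he0 _ ((box_iff a b y).2 hy), sub_zero])] at hneg
  have hct : Continuous (fun y : Fin (n+1) → ℝ => e t (WithLp.toLp 2 y)) :=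
    he.comp (continuous_const.prodMk hcl)
  have hz : ∫ y in Set.Icc (WithLp.ofLp a) (WithLp.ofLp b), e t (WithLp.toLp 2 y) = 0 :=
    le_antisymm hneg (setIntegral_nonneg measurableSet_Icc
      fun y hy => hepos _ ((box_iff a b y).2 hy))
  rw [setIntegral_eq_zero_iff_of_nonneg_ae
    (by filter_upwards [ae_restrict_mem measurableSet_Icc] with y hy
        exact hepos _ ((box_iff a b y).2 hy)) hct.integrableOn_Icc] at hz
  have hfin := Measure.eqOn_of_ae_eq hz hct.continuousOn continuousOn_const
    (Icc_sub_closure_interior _ _ hab)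
  intro x hx
  have h1 : e t x = 0 := hfin ((box_iff a b (WithLp.ofLp x)).1 hx)
  rw [← hK x hx]
  exact h1

/-- Independence of the solution from the auxiliary initial data on the positive-index
region: if two classical solutions with the same data agree at `t = 0` in `(v, p)` on all
of `Ω` and in `(u, w, q, r)` on the negative-index region `Ω \ closure Ω_P`, then they
agree in the same sense at every later time. -/
theorem independence_of_auxiliary_initial_data (d : ℕ) (hd : 1 ≤ d)
    (a b : EuclideanSpace ℝ (Fin d)) (hab : ∀ i, a i < b i)
    (ρa κa Ωρ Ωκ : EuclideanSpace ℝ (Fin d) → ℝ)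
    (hρcont : Continuous ρa) (hκcont : Continuous κa)
    (hΩρcont : Continuous Ωρ) (hΩκcont : Continuous Ωκ)
    (hρbdd : ∃ c C : ℝ, 0 < c ∧ ∀ x ∈ box a b, c ≤ ρa x ∧ ρa x ≤ C)
    (hκbdd : ∃ c C : ℝ, 0 < c ∧ ∀ x ∈ box a b, c ≤ κa x ∧ κa x ≤ C)
    (hΩρ : ∀ x, 0 ≤ Ωρ x) (hΩκ : ∀ x, 0 ≤ Ωκ x)
    (ωρ ωκ γ T : ℝ) (hωρ : 0 < ωρ) (hωκ : 0 < ωκ) (hγ : 0 ≤ γ) (hT : 0 < T)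
    (f : ℝ → EuclideanSpace ℝ (Fin d) → EuclideanSpace ℝ (Fin d))
    (g : ℝ → EuclideanSpace ℝ (Fin d) → ℝ)
    (hf : Continuous (fun z : ℝ × EuclideanSpace ℝ (Fin d) => f z.1 z.2))
    (hg : Continuous (fun z : ℝ × EuclideanSpace ℝ (Fin d) => g z.1 z.2))
    (ΩP : Set (EuclideanSpace ℝ (Fin d))) (hΩP : ΩP ⊆ box a b)
    (hPIM : ∀ x ∈ ΩP, Ωρ x = 0 ∧ Ωκ x = 0)
    (hNIM : ∀ x ∈ box a b \ closure ΩP, 0 < Ωρ x ∧ 0 < Ωκ x)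
    (S₁ S₂ : ClassicalSolution d a b ρa κa Ωρ Ωκ ωρ ωκ γ T f g)
    (hv0 : ∀ x ∈ box a b, S₁.v 0 x = S₂.v 0 x)
    (hp0 : ∀ x ∈ box a b, S₁.p 0 x = S₂.p 0 x)
    (hu0 : ∀ x ∈ box a b \ closure ΩP, S₁.u 0 x = S₂.u 0 x)
    (hw0 : ∀ x ∈ box a b \ closure ΩP, S₁.w 0 x = S₂.w 0 x)
    (hq0 : ∀ x ∈ box a b \ closure ΩP, S₁.q 0 x = S₂.q 0 x)
    (hr0 : ∀ x ∈ box a b \ closure ΩP, S₁.r 0 x = S₂.r 0 x) :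
    ∀ t ∈ Set.Icc (0 : ℝ) T,
      (∀ x ∈ box a b, S₁.v t x = S₂.v t x) ∧
      (∀ x ∈ box a b, S₁.p t x = S₂.p t x) ∧
      (∀ x ∈ box a b \ closure ΩP, S₁.u t x = S₂.u t x) ∧
      (∀ x ∈ box a b \ closure ΩP, S₁.w t x = S₂.w t x) ∧
      (∀ x ∈ box a b \ closure ΩP, S₁.q t x = S₂.q t x) ∧
      (∀ x ∈ box a b \ closure ΩP, S₁.r t x = S₂.r t x) := by
  obtain ⟨n, rfl⟩ : ∃ n, d = n + 1 := ⟨d - 1, by omega⟩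
  obtain ⟨c, _, hc, hρ⟩ := hρbdd
  obtain ⟨c', _, hc', hκ⟩ := hκbdd
  have hcl : ∀ x ∈ closure ΩP, Ωρ x = 0 ∧ Ωκ x = 0 := by
    have hcls : IsClosed {x | Ωρ x = 0 ∧ Ωκ x = 0} :=
      (isClosed_eq hΩρcont continuous_const).inter (isClosed_eq hΩκcont continuous_const)
    exact fun x hx => closure_minimal (fun y hy => hPIM y hy) hcls hx
  have key := energy_zero hab hρcont hκcont hΩρcont hΩκcont c' hc'
    (fun x hx => hc.trans_le (hρ x hx).1) (fun x hx => (hκ x hx).1) hγ (diffSol S₁ S₂)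
    (fun x hx => sub_eq_zero.2 (hv0 x hx)) (fun x hx => sub_eq_zero.2 (hp0 x hx))
    (fun x hx => by
      by_cases h : x ∈ closure ΩP
      · exact Or.inl (hcl x h)
      · exact Or.inr ⟨sub_eq_zero.2 (hu0 x ⟨hx, h⟩), sub_eq_zero.2 (hw0 x ⟨hx, h⟩),
          sub_eq_zero.2 (hq0 x ⟨hx, h⟩), sub_eq_zero.2 (hr0 x ⟨hx, h⟩)⟩)
  intro t ht
  have key2 : ∀ x ∈ box a b, S₁.v t x = S₂.v t x ∧ S₁.p t x = S₂.p t x ∧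
      (0 < Ωρ x → S₁.u t x = S₂.u t x ∧ S₁.w t x = S₂.w t x) ∧
      (0 < Ωκ x → S₁.q t x = S₂.q t x ∧ S₁.r t x = S₂.r t x) := by
    intro x hx
    have h := key t ht x hx
    have h1 : 0 < ρa x := hc.trans_le (hρ x hx).1
    have h2 : 0 < (κa x)⁻¹ := inv_pos.2 (hc'.trans_le (hκ x hx).1)
    have i1 := real_inner_self_nonneg (x := (diffSol S₁ S₂).v t x)
    have i2 := real_inner_self_nonneg (x := (diffSol S₁ S₂).u t x)
    have i3 := real_inner_self_nonneg (x := (diffSol S₁ S₂).w t x)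
    have i4 := mul_self_nonneg ((diffSol S₁ S₂).p t x)
    have i5 := mul_self_nonneg ((diffSol S₁ S₂).q t x)
    have i6 := mul_self_nonneg ((diffSol S₁ S₂).r t x)
    have hC : 0 ≤ ρa x * Ωρ x ^ 2 := by positivity
    have hD : 0 ≤ ρa x * Ωρ x ^ 2 * ωρ ^ 2 := by positivity
    have hE : 0 ≤ (κa x)⁻¹ * Ωκ x ^ 2 := by positivity
    have hG : 0 ≤ (κa x)⁻¹ * Ωκ x ^ 2 * ωκ ^ 2 := by positivity
    have j1 := mul_nonneg h1.le i1
    have j2 := mul_nonneg hC i2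
    have j3 := mul_nonneg hD i3
    have j4 := mul_nonneg h2.le i4
    have j5 := mul_nonneg hE i5
    have j6 := mul_nonneg hG i6
    refine ⟨?_, ?_, fun hpos => ⟨?_, ?_⟩, fun hpos => ⟨?_, ?_⟩⟩
    · have hz := (mul_eq_zero.1 (le_antisymm (by linarith) j1)).resolve_left h1.ne'
      exact sub_eq_zero.1 (inner_self_eq_zero.1 hz)
    · have hz := (mul_eq_zero.1 (le_antisymm (by linarith) j4)).resolve_left h2.ne'
      exact sub_eq_zero.1 (mul_self_eq_zero.1 hz)
    · have hz := (mul_eq_zero.1 (le_antisymm (by linarith) j2)).resolve_left (by positivity)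
      exact sub_eq_zero.1 (inner_self_eq_zero.1 hz)
    · have hz := (mul_eq_zero.1 (le_antisymm (by linarith) j3)).resolve_left (by positivity)
      exact sub_eq_zero.1 (inner_self_eq_zero.1 hz)
    · have hz := (mul_eq_zero.1 (le_antisymm (by linarith) j5)).resolve_left (by positivity)
      exact sub_eq_zero.1 (mul_self_eq_zero.1 hz)
    · have hz := (mul_eq_zero.1 (le_antisymm (by linarith) j6)).resolve_left (by positivity)
      exact sub_eq_zero.1 (mul_self_eq_zero.1 hz)
  exact ⟨fun x hx => (key2 x hx).1, fun x hx => (key2 x hx).2.1,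
    fun x hx => ((key2 x hx.1).2.2.1 (hNIM x hx).1).1,
    fun x hx => ((key2 x hx.1).2.2.1 (hNIM x hx).1).2,
    fun x hx => ((key2 x hx.1).2.2.2 (hNIM x hx).2).1,
    fun x hx => ((key2 x hx.1).2.2.2 (hNIM x hx).2).2⟩
end
end

section
/- (Gronwall lemma for a squared energy.) Let $T > 0$, let $E : [0,T] \to \mathbb{R}$ be continuous and nonnegative and differentiable on $(0,T)$, let $g : [0,T] \to \mathbb{R}$ be continuous and nonnegative, and let $C \ge 0$. Suppose that for every $t \in (0,T)$ the derivative of $E^2$ satisfies $(E^2)'(t) \le C\, E(t)^2 + g(t)\, E(t)$. Then for every $t \in [0,T]$, $$E(t) \;\le\; e^{C t / 2}\Big( E(0) + \int_0^t g(s)\, ds \Big).$$ -/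
/-- Gronwall lemma for a squared energy: if `E ≥ 0` is continuous on `[0,T]`,
differentiable on `(0,T)`, and `(E²)' ≤ C E² + g E` there, then
`E(t) ≤ exp (C t / 2) (E 0 + ∫₀ᵗ g)`. -/
theorem gronwall_squared_energy (T : ℝ) (hT : 0 < T) (E g : ℝ → ℝ) (C : ℝ) (hC : 0 ≤ C)
    (hEcont : ContinuousOn E (Set.Icc 0 T))
    (hEnonneg : ∀ t ∈ Set.Icc (0 : ℝ) T, 0 ≤ E t)
    (hEdiff : ∀ t ∈ Set.Ioo (0 : ℝ) T, DifferentiableAt ℝ E t)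
    (hgcont : ContinuousOn g (Set.Icc 0 T))
    (hgnonneg : ∀ t ∈ Set.Icc (0 : ℝ) T, 0 ≤ g t)
    (hineq : ∀ t ∈ Set.Ioo (0 : ℝ) T,
      deriv (fun s => E s ^ 2) t ≤ C * E t ^ 2 + g t * E t) :
    ∀ t ∈ Set.Icc (0 : ℝ) T,
      E t ≤ Real.exp (C * t / 2) * (E 0 + ∫ s in (0 : ℝ)..t, g s) := by
  have hE' : ∀ t ∈ Set.Ioo (0 : ℝ) T, deriv E t ≤ C / 2 * E t + g t / 2 := by
    intro t ht
    have htI := Set.Ioo_subset_Icc_self ht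
    have h0 := hEnonneg t htI
    have hg0 := hgnonneg t htI
    rcases h0.eq_or_lt with h | h
    · have hmin : IsLocalMin E t := by
        filter_upwards [Icc_mem_nhds ht.1 ht.2] with s hs
        rw [← h]
        exact hEnonneg s hs
      rw [hmin.deriv_eq_zero, ← h]
      linarith
    · have hd : deriv (fun s => E s ^ 2) t = 2 * E t * deriv E t := by
        have := ((hEdiff t ht).hasDerivAt.pow 2).deriv
        have h2 : deriv (fun s => E s ^ 2) t = _ := this
        rw [h2]
        simp
      have h1 := hineq t ht
      rw [hd] at h1
      by_contra hcon
      push Not at hcon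
      nlinarith [mul_lt_mul_of_pos_left hcon h]
  have hint : IntervalIntegrable g MeasureTheory.volume 0 T :=
    ContinuousOn.intervalIntegrable (by rwa [Set.uIcc_of_le hT.le])
  have hIcont : ContinuousOn (fun t => ∫ s in (0 : ℝ)..t, g s) (Set.Icc 0 T) := by
    have := intervalIntegral.continuousOn_primitive_interval
      (μ := MeasureTheory.volume) (f := g) (a := 0) (b := T)
      (by rw [Set.uIcc_of_le hT.le]; exact hgcont.integrableOn_Icc)
    rwa [Set.uIcc_of_le hT.le] at this
  have hI : ∀ t ∈ Set.Ioo (0 : ℝ) T, HasDerivAt (fun t => ∫ s in (0 : ℝ)..t, g s) (g t) t := by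
    intro t ht
    apply intervalIntegral.integral_hasDerivAt_right
    · apply hint.mono_set
      rw [Set.uIcc_of_le hT.le, Set.uIcc_of_le ht.1.le]
      exact Set.Icc_subset_Icc_right ht.2.le
    · exact (hgcont.mono Set.Ioo_subset_Icc_self).stronglyMeasurableAtFilter isOpen_Ioo t ht
    · exact hgcont.continuousAt (Icc_mem_nhds ht.1 ht.2)
  have hexp : ∀ t : ℝ, HasDerivAt (fun t => Real.exp (-(C * t / 2)))
      (Real.exp (-(C * t / 2)) * (-(C / 2))) t := by
    intro t
    have : HasDerivAt (fun t : ℝ => -(C * t / 2)) (-(C / 2)) t := by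
      have h3 : HasDerivAt (fun t : ℝ => -(C * t / 2)) (-(C * 1 / 2)) t :=
        (((hasDerivAt_id t).const_mul C).div_const 2).neg
      rwa [mul_one] at h3
    exact this.exp
  have hF : ∀ t ∈ Set.Ioo (0 : ℝ) T,
      HasDerivAt (fun t => Real.exp (-(C * t / 2)) * E t - ∫ s in (0 : ℝ)..t, g s)
        (Real.exp (-(C * t / 2)) * (-(C / 2)) * E t + Real.exp (-(C * t / 2)) * deriv E t - g t)
        t := fun t ht => ((hexp t).mul (hEdiff t ht).hasDerivAt).sub (hI t ht)
  have hanti : AntitoneOn (fun t => Real.exp (-(C * t / 2)) * E t - ∫ s in (0 : ℝ)..t, g s)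
      (Set.Icc 0 T) := by
    apply antitoneOn_of_deriv_nonpos (convex_Icc 0 T)
    · exact (ContinuousOn.mul (Continuous.continuousOn (by fun_prop)) hEcont).sub hIcont
    · rw [interior_Icc]
      exact fun t ht => (hF t ht).differentiableAt.differentiableWithinAt
    · rw [interior_Icc]
      intro t ht
      rw [(hF t ht).deriv]
      have hg0 := hgnonneg t (Set.Ioo_subset_Icc_self ht)
      have hpos := Real.exp_pos (-(C * t / 2))
      have hle : Real.exp (-(C * t / 2)) ≤ 1 := by
        rw [Real.exp_le_one_iff]
        have := mul_nonneg hC ht.1.le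
        linarith
      have h1 := mul_le_mul_of_nonneg_left (hE' t ht) hpos.le
      have h2 := mul_le_mul_of_nonneg_right hle hg0
      linarith
  intro t ht
  have h := hanti (Set.left_mem_Icc.2 hT.le) ht ht.1
  simp only [mul_zero, zero_div, neg_zero, Real.exp_zero, one_mul,
    intervalIntegral.integral_same, sub_zero] at h
  have hk : Real.exp (C * t / 2) * (Real.exp (-(C * t / 2)) * E t) = E t := by
    rw [← mul_assoc, ← Real.exp_add]
    simp
  rw [← hk]
  apply mul_le_mul_of_nonneg_left _ (Real.exp_pos _).le
  linarith
end

section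
/- (Trapezoidal time-discretization error for Banach-space-valued functions.) Let $X$ be a real Banach space, let $a < b$ be real numbers, and let $f : \mathbb{R} \to X$ be three times continuously differentiable on an open set containing $[a,b]$. Then $$\Big\| f(b) - f(a) - \frac{b-a}{2}\big( f'(a) + f'(b) \big) \Big\| \;\le\; \frac{(b-a)^2}{8} \int_a^b \| f'''(s) \|\, ds.$$ -/
/-- Trapezoidal time-discretization error for Banach-space-valued functions:
if `f` is `C³` on an open set containing `[a,b]`, then
`‖f b - f a - ((b-a)/2)(f' a + f' b)‖ ≤ ((b-a)²/8) ∫ₐᵇ ‖f''' s‖ ds`. -/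
theorem trapezoid_error_banach (X : Type*) [NormedAddCommGroup X] [NormedSpace ℝ X]
    [CompleteSpace X] (a b : ℝ) (hab : a < b) (f : ℝ → X)
    (hf : ∃ s : Set ℝ, IsOpen s ∧ Set.Icc a b ⊆ s ∧ ContDiffOn ℝ 3 f s) :
    ‖f b - f a - ((b - a) / 2) • (deriv f a + deriv f b)‖
      ≤ (b - a) ^ 2 / 8 * ∫ s in a..b, ‖iteratedDeriv 3 f s‖ := by
  obtain ⟨s, hs, hsub, hf⟩ := hf
  have h1 : ContDiffOn ℝ 2 (deriv f) s := hf.deriv_of_isOpen hs (by norm_num)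
  have h2 : ContDiffOn ℝ 1 (deriv (deriv f)) s := h1.deriv_of_isOpen hs (by norm_num)
  have h3 : ContDiffOn ℝ 0 (deriv (deriv (deriv f))) s := h2.deriv_of_isOpen hs (by norm_num)
  have e3 : iteratedDeriv 3 f = deriv (deriv (deriv f)) := by
    simp [iteratedDeriv_succ, iteratedDeriv_zero]
  rw [e3]
  have hd : ∀ (g : ℝ → X) (n : WithTop ℕ∞), n ≠ 0 → ContDiffOn ℝ n g s → ∀ x ∈ s,
      HasDerivAt g (deriv g x) x := fun g n hn hg x hx =>
    ((hg.differentiableOn hn).differentiableAt (hs.mem_nhds hx)).hasDerivAt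
  have hu : Set.uIcc a b ⊆ s := by rwa [Set.uIcc_of_le hab.le]
  have hc : ContinuousOn (deriv (deriv (deriv f))) (Set.uIcc a b) := h3.continuousOn.mono hu
  have key : ∫ x in a..b, ((x - a) * (x - b) / 2) • deriv (deriv (deriv f)) x
      = f b - f a - ((b - a) / 2) • (deriv f a + deriv f b) := by
    rw [intervalIntegral.integral_eq_sub_of_hasDerivAt
      (f := fun x => f x - (x - (a + b) / 2) • deriv f x
        + ((x - a) * (x - b) / 2) • deriv (deriv f) x)]
    · simp only [sub_self, zero_mul, mul_zero, zero_div, zero_smul]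
      module
    · intro x hx
      have d0 := hd f 3 (by norm_num) hf x (hu hx)
      have d1 := hd _ 2 (by norm_num) h1 x (hu hx)
      have d2 := hd _ 1 (by norm_num) h2 x (hu hx)
      have p1 : HasDerivAt (fun x : ℝ => x - (a + b) / 2) 1 x := (hasDerivAt_id x).sub_const _
      have p2 : HasDerivAt (fun x : ℝ => (x - a) * (x - b) / 2) (x - (a + b) / 2) x := by
        have := ((((hasDerivAt_id x).sub_const a).mul ((hasDerivAt_id x).sub_const b)).div_const 2)
        refine this.congr_deriv ?_
        simp only [id]
        ring
      refine ((d0.sub (p1.smul d1)).add (p2.smul d2)).congr_deriv ?_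
      module
    · apply ContinuousOn.intervalIntegrable
      exact ContinuousOn.smul (by fun_prop) hc
  rw [← key, ← intervalIntegral.integral_const_mul]
  refine intervalIntegral.norm_integral_le_of_norm_le hab.le ?_ ?_
  · refine Filter.Eventually.of_forall fun x hx => ?_
    rw [norm_smul]
    refine mul_le_mul_of_nonneg_right ?_ (norm_nonneg _)
    rw [Real.norm_eq_abs, abs_le]
    constructor
    · nlinarith [sq_nonneg (x - (a + b) / 2)]
    · nlinarith [mul_nonneg (sub_nonneg.2 hx.1.le) (sub_nonneg.2 hx.2), sq_nonneg (b - a)]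
  · exact (continuousOn_const.mul hc.norm).intervalIntegrable
end
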